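/- arXiv:2211.04953 — 2 statements merged into one kernel-verified Lean document; each statement's English description precedes it below -/
import Mathlib

section
/- Let α ∈ (ℤ_{≥0})ⁿ, set q_α := Σ_{j=1}^n (α_j+1)/p_j − 1, and let t ∈ ℝ. If q_α ≠ 0, then ∫_{{−t−1 < ψ < −t}} |w^α|² e^{−ψ} dλ_n = πⁿ (q_α+1)(e^{−q_α t} − e^{−q_α (t+1)}) / (q_α · Π_{j=1}^n (α_j+1)); if q_α = 0, then ∫_{{−t−1 < ψ < −t}} |w^α|² e^{−ψ} dλ_n = πⁿ / Π_{j=1}^n (α_j+1). -/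
open MeasureTheory Filter

/-- `psi p w = max_j 2 p_j log |w_j|`. -/
noncomputable def psi {n : ℕ} (p : Fin n → ℝ) (w : Fin n → ℂ) : ℝ :=
  ⨆ j, 2 * p j * Real.log ‖w j‖

/-!
Let `μ = ∏ |w_j|^(2 α_j) dλ_n` and `Q = ∑ (α_j + 1) / p_j`. Up to a null set, `{ψ ≤ s}` is the
polydisc of radii `exp (s / (2 p_j))`, so `μ {ψ ≤ s}` is a product of radial integrals, equal to
`π^n / ∏ (α_j + 1) * exp (Q s)`. Hence `ψ` pushes `μ` forward to a measure on `ℝ` with density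
proportional to `Q exp (Q s)`, and the integral over a layer becomes `∫ exp ((Q - 1) s) ds`.
-/

open Set Metric Module
open scoped ENNReal

section Measure

theorem measure_ext_of_Iic_ne_top {X : Type*} [TopologicalSpace X] [MeasurableSpace X]
    [SecondCountableTopology X] [LinearOrder X] [OrderTopology X] [BorelSpace X] [NoMinOrder X]
    {μ ν : Measure X} (hμ : ∀ a, μ (Iic a) ≠ ∞) (h : ∀ a, μ (Iic a) = ν (Iic a)) : μ = ν := by
  refine μ.ext_of_Ioc' ν (fun a b _ ↦ measure_ne_top_of_subset Ioc_subset_Iic_self (hμ b)) ?_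
  intro a b hab
  have hsub : Iic a ⊆ Iic b := Iic_subset_Iic.2 hab.le
  rw [← Iic_sdiff_Iic, measure_sdiff hsub measurableSet_Iic.nullMeasurableSet (hμ a),
    measure_sdiff hsub measurableSet_Iic.nullMeasurableSet (h a ▸ hμ a), h a, h b]

theorem lintegral_fin_prod_eq_prod {n : ℕ} {X : Fin n → Type*} [∀ i, MeasurableSpace (X i)]
    {μ : ∀ i, Measure (X i)} [∀ i, SigmaFinite (μ i)] {f : ∀ i, X i → ℝ≥0∞}
    (hf : ∀ i, AEMeasurable (f i) (μ i)) :
    ∫⁻ x, ∏ i, f i (x i) ∂Measure.pi μ = ∏ i, ∫⁻ y, f i y ∂μ i := by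
  induction n with
  | zero => simp
  | succ n ih =>
    have htail : AEMeasurable (fun x : ∀ i : Fin n, X i.succ ↦ ∏ i, f i.succ (x i))
        (Measure.pi fun i ↦ μ i.succ) :=
      Finset.aemeasurable_fun_prod _ fun i _ ↦
        (hf i.succ).comp_quasiMeasurePreserving (Measure.quasiMeasurePreserving_eval _ i)
    calc ∫⁻ x, ∏ i, f i (x i) ∂Measure.pi μ
        = ∫⁻ x : X 0 × ∀ i : Fin n, X i.succ, f 0 x.1 * ∏ i, f i.succ (x.2 i)
            ∂(μ 0).prod (Measure.pi fun i ↦ μ i.succ) := by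
          rw [← (measurePreserving_piFinSuccAbove μ 0).symm.lintegral_comp_emb
            (MeasurableEquiv.measurableEmbedding _)]
          exact lintegral_congr fun x ↦ Fin.prod_univ_succ _
      _ = (∫⁻ y, f 0 y ∂μ 0) * ∏ i : Fin n, ∫⁻ y, f i.succ y ∂μ i.succ := by
          rw [lintegral_prod_mul (hf 0) htail, ih fun i ↦ hf i.succ]
      _ = ∏ i, ∫⁻ y, f i y ∂μ i := (Fin.prod_univ_succ fun i ↦ ∫⁻ y, f i y ∂μ i).symm

theorem lintegral_fintype_prod_eq_prod {ι : Type*} [Fintype ι] {X : ι → Type*}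
    [∀ i, MeasurableSpace (X i)] {μ : ∀ i, Measure (X i)} [∀ i, SigmaFinite (μ i)]
    {f : ∀ i, X i → ℝ≥0∞} (hf : ∀ i, AEMeasurable (f i) (μ i)) :
    ∫⁻ x, ∏ i, f i (x i) ∂Measure.pi μ = ∏ i, ∫⁻ y, f i y ∂μ i := by
  let e := (Fintype.equivFin ι).symm
  rw [← (measurePreserving_piCongrLeft μ e).lintegral_comp_emb
    (MeasurableEquiv.measurableEmbedding _)]
  simp_rw [← e.prod_comp, MeasurableEquiv.coe_piCongrLeft, Equiv.piCongrLeft_apply_apply]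
  exact lintegral_fin_prod_eq_prod fun i ↦ hf (e i)

theorem setLIntegral_Ioo_ofReal_eq_ofReal_intervalIntegral {f : ℝ → ℝ} {a b : ℝ} (hab : a ≤ b)
    (hf : IntervalIntegrable f volume a b) (hnonneg : ∀ x ∈ Ioo a b, 0 ≤ f x) :
    ∫⁻ x in Ioo a b, ENNReal.ofReal (f x) = ENNReal.ofReal (∫ x in a..b, f x) := by
  rw [intervalIntegral.integral_of_le hab, integral_Ioc_eq_integral_Ioo,
    ofReal_integral_eq_lintegral_ofReal]
  · exact (intervalIntegrable_iff_integrableOn_Ioo_of_le hab).1 hf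
  · exact ae_restrict_of_forall_mem measurableSet_Ioo hnonneg

end Measure

section Exp

theorem integral_exp_mul_left {c : ℝ} (hc : c ≠ 0) (a b : ℝ) :
    ∫ x in a..b, Real.exp (c * x) = (Real.exp (c * b) - Real.exp (c * a)) / c := by
  rw [intervalIntegral.integral_comp_mul_left _ hc, integral_exp, smul_eq_mul, inv_mul_eq_div]

theorem setLIntegral_Iic_exp_mul {c : ℝ} (hc : 0 < c) (s : ℝ) :
    ∫⁻ x in Iic s, ENNReal.ofReal (Real.exp (c * x)) = ENNReal.ofReal (Real.exp (c * s) / c) := by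
  rw [← integral_exp_mul_Iic hc, ofReal_integral_eq_lintegral_ofReal (integrableOn_exp_mul_Iic hc s)
    (.of_forall fun x ↦ (Real.exp_pos _).le)]

end Exp

theorem norm_prod_pow_sq {ι K : Type*} [Fintype ι] [NormedField K] (w : ι → K) (α : ι → ℕ) :
    ‖∏ j, w j ^ α j‖ ^ 2 = ∏ j, ‖w j‖ ^ (2 * (α j : ℝ)) := by
  rw [norm_prod, ← Finset.prod_pow]
  refine Finset.prod_congr rfl fun j _ ↦ ?_
  rw [norm_pow, ← pow_mul, mul_comm, ← Real.rpow_natCast, Nat.cast_mul, Nat.cast_ofNat]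

section Ball

variable {E : Type*} [NormedAddCommGroup E] [NormedSpace ℝ E] [FiniteDimensional ℝ E]
  [Nontrivial E] [MeasurableSpace E] [BorelSpace E] (μ : Measure E) [μ.IsAddHaarMeasure]

theorem setIntegral_ball_fun_norm {F : Type*} [NormedAddCommGroup F] [NormedSpace ℝ F]
    (f : ℝ → F) (R : ℝ) :
    ∫ x in ball (0 : E) R, f ‖x‖ ∂μ =
      finrank ℝ E • μ.real (ball 0 1) • ∫ r in Ioo 0 R, r ^ (finrank ℝ E - 1) • f r := by
  have hball : (ball (0 : E) R).indicator (fun x ↦ f ‖x‖) = fun x ↦ (Iio R).indicator f ‖x‖ := by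
    ext x
    simp only [indicator, mem_ball_zero_iff, mem_Iio]
  have hIoo : ∀ r, r ^ (finrank ℝ E - 1) • (Iio R).indicator f r =
      (Iio R).indicator (fun r ↦ r ^ (finrank ℝ E - 1) • f r) r :=
    fun r ↦ (indicator_smul_apply _ (fun r : ℝ ↦ r ^ (finrank ℝ E - 1)) f r).symm
  rw [← integral_indicator measurableSet_ball, hball, integral_fun_norm_addHaar]
  simp only [hIoo]
  rw [setIntegral_indicator measurableSet_Iio, Ioi_inter_Iio]

theorem integrableOn_ball_norm_rpow {s : ℝ} (hs : -(finrank ℝ E : ℝ) < s) (R : ℝ) :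
    IntegrableOn (fun x : E ↦ ‖x‖ ^ s) (ball 0 R) μ := by
  refine integrableOn_ball_of_norm_le_rpow (C := 1) (α := -s) finrank_pos (by linarith)
    (.of_forall fun x ↦ ?_) (measurable_norm.pow_const s).aestronglyMeasurable
  rw [neg_neg, one_mul, Real.norm_of_nonneg (by positivity)]

theorem setIntegral_ball_norm_rpow {s R : ℝ} (hs : -(finrank ℝ E : ℝ) < s) (hR : 0 ≤ R) :
    ∫ x in ball (0 : E) R, ‖x‖ ^ s ∂μ =
      finrank ℝ E * μ.real (ball 0 1) * (R ^ (finrank ℝ E + s) / (finrank ℝ E + s)) := by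
  have hdim : ((finrank ℝ E - 1 : ℕ) : ℝ) = finrank ℝ E - 1 := Nat.cast_pred finrank_pos
  have hpow : ∀ r ∈ Ioo 0 R, r ^ (finrank ℝ E - 1) • r ^ s = r ^ (finrank ℝ E - 1 + s : ℝ) := by
    intro r hr
    rw [smul_eq_mul, ← Real.rpow_natCast, ← Real.rpow_add hr.1, hdim]
  rw [setIntegral_ball_fun_norm μ (· ^ s), setIntegral_congr_fun measurableSet_Ioo hpow,
    ← integral_Ioc_eq_integral_Ioo, ← intervalIntegral.integral_of_le hR,
    integral_rpow (.inl (by linarith)), sub_add_eq_add_sub, sub_add_cancel,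
    Real.zero_rpow (by linarith), sub_zero, nsmul_eq_mul, smul_eq_mul, mul_assoc]

theorem setLIntegral_closedBall_norm_rpow {s R : ℝ} (hs : -(finrank ℝ E : ℝ) < s) (hR : 0 ≤ R) :
    ∫⁻ x in closedBall (0 : E) R, ENNReal.ofReal (‖x‖ ^ s) ∂μ =
      ENNReal.ofReal
        (finrank ℝ E * μ.real (ball 0 1) * (R ^ (finrank ℝ E + s) / (finrank ℝ E + s))) := by
  have hball : closedBall (0 : E) R =ᵐ[μ] ball 0 R := by
    rw [← ball_union_sphere]
    exact union_ae_eq_left_of_ae_eq_empty (ae_eq_empty.2 (Measure.addHaar_sphere μ 0 R))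
  rw [setLIntegral_congr hball, ← setIntegral_ball_norm_rpow μ hs hR,
    ofReal_integral_eq_lintegral_ofReal (integrableOn_ball_norm_rpow μ hs R)
      (.of_forall fun x ↦ by positivity)]

end Ball

theorem setLIntegral_complex_closedBall_norm_rpow {s R : ℝ} (hs : -2 < s) (hR : 0 ≤ R) :
    ∫⁻ z in closedBall (0 : ℂ) R, ENNReal.ofReal (‖z‖ ^ s) =
      ENNReal.ofReal (2 * Real.pi * (R ^ (2 + s) / (2 + s))) := by
  simpa [measureReal_def, Complex.finrank_real_complex] using
    setLIntegral_closedBall_norm_rpow (volume : Measure ℂ) (by simpa using hs) hR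

section MonomialMeasure

variable {ι : Type*} [Fintype ι] {α : ι → ℝ}

/-- The measure `|w^α|² dλ` on `ℂ^ι`, with the monomial weight `|w^α|² = ∏ |w_j|^(2 α_j)`
allowed real exponents `α_j`. -/
noncomputable def monomialMeasure (α : ι → ℝ) : Measure (ι → ℂ) :=
  volume.withDensity fun w ↦ ∏ j, ENNReal.ofReal (‖w j‖ ^ (2 * α j))

theorem setLIntegral_monomialMeasure {s : Set (ι → ℂ)} (hs : MeasurableSet s)
    {f : (ι → ℂ) → ℝ} (hf : Measurable f) :
    ∫⁻ w in s, ENNReal.ofReal (f w) ∂monomialMeasure α =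
      ∫⁻ w in s, ENNReal.ofReal ((∏ j, ‖w j‖ ^ (2 * α j)) * f w) := by
  have hnonneg : ∀ w : ι → ℂ, ∀ j ∈ Finset.univ, 0 ≤ ‖w j‖ ^ (2 * α j) :=
    fun w j _ ↦ by positivity
  rw [monomialMeasure, setLIntegral_withDensity_eq_setLIntegral_mul _
    (by fun_prop) hf.ennreal_ofReal hs]
  refine lintegral_congr fun w ↦ ?_
  rw [Pi.mul_apply, ← ENNReal.ofReal_prod_of_nonneg (hnonneg w),
    ← ENNReal.ofReal_mul (Finset.prod_nonneg (hnonneg w))]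

theorem monomialMeasure_pi (α : ι → ℝ) (s : ι → Set ℂ) :
    monomialMeasure α (univ.pi s) = ∏ j, ∫⁻ z in s j, ENNReal.ofReal (‖z‖ ^ (2 * α j)) := by
  rw [monomialMeasure, withDensity_apply', volume_pi, Measure.restrict_pi_pi]
  exact lintegral_fintype_prod_eq_prod fun j ↦
    (measurable_norm.pow_const (2 * α j)).ennreal_ofReal.aemeasurable

theorem monomialMeasure_polydisc (hα : ∀ j, -1 < α j) {r : ι → ℝ} (hr : ∀ j, 0 ≤ r j) :
    monomialMeasure α (univ.pi fun j ↦ closedBall 0 (r j)) =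
      ENNReal.ofReal (∏ j, Real.pi * (r j ^ (2 * (α j + 1)) / (α j + 1))) := by
  have hdisc : ∀ j, ∫⁻ z in closedBall (0 : ℂ) (r j), ENNReal.ofReal (‖z‖ ^ (2 * α j)) =
      ENNReal.ofReal (Real.pi * (r j ^ (2 * (α j + 1)) / (α j + 1))) := by
    intro j
    have hαj : α j + 1 ≠ 0 := by linarith [hα j]
    rw [setLIntegral_complex_closedBall_norm_rpow (by linarith [hα j]) (hr j),
      show 2 + 2 * α j = 2 * (α j + 1) by ring]
    congr 1
    field_simp
  rw [monomialMeasure_pi, ENNReal.ofReal_prod_of_nonneg]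
  · exact Finset.prod_congr rfl fun j _ ↦ hdisc j
  · intro j _
    have hαj : 0 < α j + 1 := by linarith [hα j]
    have := hr j
    positivity

theorem ae_forall_apply_ne_zero : ∀ᵐ w : ι → ℂ, ∀ j, w j ≠ 0 :=
  ae_all_iff.2 fun j ↦ (Measure.quasiMeasurePreserving_eval (fun _ : ι ↦ (volume : Measure ℂ)) j).ae
    (Measure.ae_ne volume 0)

end MonomialMeasure

section Psi

variable {n : ℕ} {p : Fin n → ℝ} {α : Fin n → ℝ}

theorem measurable_psi (p : Fin n → ℝ) : Measurable (psi p) :=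
  Measurable.iSup fun j ↦ by fun_prop

theorem psi_le_iff [NeZero n] (hp : ∀ j, 0 < p j) {w : Fin n → ℂ} (hw : ∀ j, w j ≠ 0) {s : ℝ} :
    psi p w ≤ s ↔ ∀ j, ‖w j‖ ≤ Real.exp (s / (2 * p j)) := by
  rw [psi, ciSup_le_iff (finite_range _).bddAbove]
  refine forall_congr' fun j ↦ ?_
  rw [← Real.log_le_iff_le_exp (norm_pos_iff.2 (hw j)), le_div_iff₀' (by linarith [hp j])]

theorem preimage_psi_Iic_ae_eq [NeZero n] (hp : ∀ j, 0 < p j) (s : ℝ) :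
    psi p ⁻¹' Iic s =ᵐ[volume] univ.pi fun j ↦ closedBall 0 (Real.exp (s / (2 * p j))) := by
  filter_upwards [ae_forall_apply_ne_zero] with w hw
  exact propext <| (psi_le_iff hp hw).trans <| by
    simp only [← mem_closedBall_zero_iff, ← mem_univ_pi]
    rfl

theorem monomialMeasure_preimage_psi_Iic [NeZero n] (hp : ∀ j, 0 < p j) (hα : ∀ j, -1 < α j)
    (s : ℝ) :
    monomialMeasure α (psi p ⁻¹' Iic s) =
      ENNReal.ofReal
        (Real.pi ^ n / (∏ j, (α j + 1)) * Real.exp ((∑ j, (α j + 1) / p j) * s)) := by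
  have hfactor : ∀ j, Real.exp (s / (2 * p j)) ^ (2 * (α j + 1)) =
      Real.exp ((α j + 1) / p j * s) := by
    intro j
    have hpj := (hp j).ne'
    rw [← Real.exp_mul]
    congr 1
    field_simp
  have hac : monomialMeasure α ≪ volume := withDensity_absolutelyContinuous _ _
  rw [measure_congr (hac.ae_eq (preimage_psi_Iic_ae_eq hp s)),
    monomialMeasure_polydisc hα fun j ↦ (Real.exp_pos _).le]
  simp only [hfactor, Finset.prod_mul_distrib, Finset.prod_div_distrib, Finset.prod_const,
    Finset.card_univ, Fintype.card_fin, Finset.sum_mul, Real.exp_sum]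
  rw [mul_div_left_comm, mul_comm]

theorem map_psi_monomialMeasure [NeZero n] (hp : ∀ j, 0 < p j) (hα : ∀ j, -1 < α j)
    {Q : ℝ} (hQ : Q = ∑ j, (α j + 1) / p j) :
    (monomialMeasure α).map (psi p) = ENNReal.ofReal (Real.pi ^ n / (∏ j, (α j + 1)) * Q) •
      volume.withDensity fun s ↦ ENNReal.ofReal (Real.exp (Q * s)) := by
  have hα' : ∀ j, 0 < α j + 1 := fun j ↦ by linarith [hα j]
  have hQ_pos : 0 < Q :=
    hQ ▸ Finset.sum_pos (fun j _ ↦ div_pos (hα' j) (hp j)) Finset.univ_nonempty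
  have hprod : 0 < ∏ j, (α j + 1) := Finset.prod_pos fun j _ ↦ hα' j
  have hcdf : ∀ s, (monomialMeasure α).map (psi p) (Iic s) =
      ENNReal.ofReal (Real.pi ^ n / (∏ j, (α j + 1)) * Real.exp (Q * s)) := by
    intro s
    rw [Measure.map_apply (measurable_psi p) measurableSet_Iic,
      monomialMeasure_preimage_psi_Iic hp hα, hQ]
  refine measure_ext_of_Iic_ne_top (fun s ↦ hcdf s ▸ ENNReal.ofReal_ne_top) fun s ↦ ?_
  rw [hcdf, Measure.smul_apply, withDensity_apply _ measurableSet_Iic,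
    setLIntegral_Iic_exp_mul hQ_pos, smul_eq_mul, ← ENNReal.ofReal_mul (by positivity)]
  congr 1
  field_simp

theorem setLIntegral_layer_psi [NeZero n] (hp : ∀ j, 0 < p j) (hα : ∀ j, -1 < α j)
    {a b : ℝ} (hab : a ≤ b) {Q : ℝ} (hQ : Q = ∑ j, (α j + 1) / p j) :
    ∫⁻ w in psi p ⁻¹' Ioo a b, ENNReal.ofReal (Real.exp (-psi p w)) ∂monomialMeasure α =
      ENNReal.ofReal
        (Real.pi ^ n / (∏ j, (α j + 1)) * Q * ∫ s in a..b, Real.exp ((Q - 1) * s)) := by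
  have hC : 0 ≤ Real.pi ^ n / (∏ j, (α j + 1)) * Q := by
    have hα' : ∀ j, 0 ≤ α j + 1 := fun j ↦ by linarith [hα j]
    have hprod : 0 ≤ ∏ j, (α j + 1) := Finset.prod_nonneg fun j _ ↦ hα' j
    have hQ_nonneg : 0 ≤ Q := hQ ▸ Finset.sum_nonneg fun j _ ↦ div_nonneg (hα' j) (hp j).le
    positivity
  calc ∫⁻ w in psi p ⁻¹' Ioo a b, ENNReal.ofReal (Real.exp (-psi p w)) ∂monomialMeasure α
      = ∫⁻ s in Ioo a b, ENNReal.ofReal (Real.exp (-s)) ∂(monomialMeasure α).map (psi p) :=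
        (setLIntegral_map (f := fun s ↦ ENNReal.ofReal (Real.exp (-s))) measurableSet_Ioo
          (by fun_prop) (measurable_psi p)).symm
    _ = ENNReal.ofReal (Real.pi ^ n / (∏ j, (α j + 1)) * Q) *
          ∫⁻ s in Ioo a b, ENNReal.ofReal (Real.exp ((Q - 1) * s)) := by
        rw [map_psi_monomialMeasure hp hα hQ, setLIntegral_smul_measure, smul_eq_mul,
          setLIntegral_withDensity_eq_setLIntegral_mul _ (by fun_prop) (by fun_prop)
            measurableSet_Ioo]
        congr 1
        refine lintegral_congr fun s ↦ ?_
        rw [Pi.mul_apply, ← ENNReal.ofReal_mul (Real.exp_pos _).le, ← Real.exp_add]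
        congr 2
        ring
    _ = _ := by
        rw [setLIntegral_Ioo_ofReal_eq_ofReal_intervalIntegral hab
          (Continuous.intervalIntegrable (by fun_prop) a b) fun s _ ↦ (Real.exp_pos _).le,
          ENNReal.ofReal_mul hC]

end Psi

theorem stmt_3_general (n : ℕ) [NeZero n] (p : Fin n → ℝ) (hp : ∀ j, 0 < p j)
    (α : Fin n → ℝ) (hα : ∀ j, -1 < α j) {a b : ℝ} (hab : a ≤ b)
    (q : ℝ) (hq : q = ∑ j, (α j + 1) / p j - 1) :
    (q ≠ 0 →
      (∫⁻ w in {w : Fin n → ℂ | a < psi p w ∧ psi p w < b},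
          ENNReal.ofReal ((∏ j, ‖w j‖ ^ (2 * α j)) * Real.exp (-psi p w))) =
        ENNReal.ofReal (Real.pi ^ n * (q + 1) * (Real.exp (q * b) - Real.exp (q * a)) /
          (q * ∏ j, (α j + 1)))) ∧
    (q = 0 →
      (∫⁻ w in {w : Fin n → ℂ | a < psi p w ∧ psi p w < b},
          ENNReal.ofReal ((∏ j, ‖w j‖ ^ (2 * α j)) * Real.exp (-psi p w))) =
        ENNReal.ofReal (Real.pi ^ n * (b - a) / ∏ j, (α j + 1))) := by
  have hlayer : {w | a < psi p w ∧ psi p w < b} = psi p ⁻¹' Ioo a b := rfl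
  rw [hlayer, ← setLIntegral_monomialMeasure (f := fun w ↦ Real.exp (-psi p w))
      (measurable_psi p measurableSet_Ioo) (measurable_psi p).neg.exp,
    setLIntegral_layer_psi hp hα hab (eq_sub_iff_add_eq.1 hq)]
  refine ⟨fun hq₀ ↦ ?_, fun hq₀ ↦ ?_⟩
  · rw [add_sub_cancel_right, integral_exp_mul_left hq₀, div_mul_eq_mul_div, div_mul_div_comm,
      mul_comm (∏ j, _) q]
  · simp [hq₀, div_mul_eq_mul_div]

theorem stmt_3 (n : ℕ) (hn : 0 < n) (p : Fin n → ℝ) (hp : ∀ j, 0 < p j)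
    (α : Fin n → ℕ) (t : ℝ)
    (q : ℝ) (hq : q = ∑ j, ((α j : ℝ) + 1) / p j - 1) :
    (q ≠ 0 →
      (∫⁻ w in {w : Fin n → ℂ | -t - 1 < psi p w ∧ psi p w < -t},
          ENNReal.ofReal (‖∏ j, (w j) ^ (α j)‖ ^ 2 * Real.exp (-psi p w))) =
        ENNReal.ofReal (Real.pi ^ n * (q + 1) *
          (Real.exp (-(q * t)) - Real.exp (-(q * (t + 1)))) /
          (q * ∏ j, ((α j : ℝ) + 1)))) ∧
    (q = 0 →
      (∫⁻ w in {w : Fin n → ℂ | -t - 1 < psi p w ∧ psi p w < -t},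
          ENNReal.ofReal (‖∏ j, (w j) ^ (α j)‖ ^ 2 * Real.exp (-psi p w))) =
        ENNReal.ofReal (Real.pi ^ n / ∏ j, ((α j : ℝ) + 1))) := by
  have : NeZero n := .of_pos hn
  simpa only [norm_prod_pow_sq, ← neg_add', mul_neg, sub_neg_eq_add, neg_add_cancel_left,
    mul_one] using
    stmt_3_general n p hp (fun j ↦ α j) (fun j ↦ neg_one_lt_zero.trans_le (α j).cast_nonneg)
      (sub_one_lt (-t)).le q hq
end

section
/- Let t₀ > 0 and let f be a holomorphic function on the polydisc {ψ < −t₀} with Taylor expansion f(w) = Σ_{α ∈ (ℤ_{≥0})ⁿ} b_α w^α. Then for every t ≥ t₀, as an equality in [0,+∞], ∫_{{ψ < −t}} |f|² dλ_n = Σ_{α ∈ (ℤ_{≥0})ⁿ} e^{−(Σ_{j=1}^n (α_j+1)/p_j) t} · |b_α|² πⁿ / Π_{j=1}^n (α_j+1). -/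
open MeasureTheory Filter

/-- The polydisc `{ψ < s} = Π_j {|w_j| < e^{s/(2 p_j)}}`. -/
noncomputable def polydisc {n : ℕ} (p : Fin n → ℝ) (s : ℝ) : Set (Fin n → ℂ) :=
  {w | ∀ j, ‖w j‖ < Real.exp (s / (2 * p j))}

/-- `qExp p α = Σ_j (α_j + 1) / p_j`. -/
noncomputable def qExp {n : ℕ} (p : Fin n → ℝ) (α : Fin n → ℕ) : ℝ :=
  ∑ j, ((α j : ℝ) + 1) / p j

/-!
The mean of `‖f‖²` over the torus orbit `{(e^{iθ_j} w_j)}` of a point `w` is, by Parseval's identity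
applied to `θ ↦ f (e^{iθ} w) = ∑ b_α w^α e^{i⟨α, θ⟩}`, equal to `∑ ‖b_α w^α‖²`. Lebesgue measure is
invariant under these rotations, so Tonelli's theorem turns this into
`∫_D ‖f‖² = ∑ ‖b_α‖² ∫_D ‖w^α‖²` for every Reinhardt set `D`. On a polydisc the monomial
integrals factor into integrals over discs, computed in polar coordinates.
-/

section Parseval

open UnitAddTorus

lemma hasSum_norm_sq_of_orthonormal {𝕜 E ι : Type*} [RCLike 𝕜] [NormedAddCommGroup E]
    [InnerProductSpace 𝕜 E] {v : ι → E} (hv : Orthonormal 𝕜 v) {c : ι → 𝕜} {x : E}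
    (h : HasSum (fun i => c i • v i) x) : HasSum (fun i => ‖c i‖ ^ 2) (‖x‖ ^ 2) := by
  have hpartial (s : Finset ι) : ‖∑ i ∈ s, c i • v i‖ ^ 2 = ∑ i ∈ s, ‖c i‖ ^ 2 := by
    simpa using hv.orthogonalFamily.norm_sum c s
  simpa only [HasSum, ← hpartial] using Tendsto.pow (Tendsto.norm h) 2

lemma enorm_sq_eq_lintegral_enorm_sq {X E : Type*} [MeasurableSpace X] {μ : Measure X}
    [NormedAddCommGroup E] (g : Lp E 2 μ) : ‖g‖ₑ ^ 2 = ∫⁻ x, ‖g x‖ₑ ^ 2 ∂μ := by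
  simpa [Lp.enorm_def] using
    eLpNorm_nnreal_pow_eq_lintegral (f := g) (μ := μ) (two_ne_zero : (2 : NNReal) ≠ 0)

variable {d : Type*} [Fintype d]

lemma volume_unitAddTorus_eq_pi_haarAddCircle :
    (volume : Measure (UnitAddTorus d)) = Measure.pi fun _ => AddCircle.haarAddCircle := by
  simp [volume_pi, AddCircle.volume_eq_smul_haarAddCircle]

instance isProbabilityMeasure_volume_unitAddTorus :
    IsProbabilityMeasure (volume : Measure (UnitAddTorus d)) := by
  rw [volume_unitAddTorus_eq_pi_haarAddCircle]
  infer_instance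

lemma orthonormal_toLp_mFourier : Orthonormal ℂ fun k : d → ℤ =>
    ContinuousMap.toLp (E := ℂ) 2 (volume : Measure (UnitAddTorus d)) ℂ (mFourier k) := by
  -- `orthonormal_mFourier` is stated for a file-local instance that takes Haar measure as `volume`.
  have transfer (μ : Measure (UnitAddTorus d)) [IsFiniteMeasure μ]
      (hμ : μ = Measure.pi fun _ => AddCircle.haarAddCircle) :
      Orthonormal ℂ fun k : d → ℤ => ContinuousMap.toLp (E := ℂ) 2 μ ℂ (mFourier k) := by
    subst hμ
    exact orthonormal_mFourier
  exact transfer volume volume_unitAddTorus_eq_pi_haarAddCircle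

lemma lintegral_enorm_sq_of_hasSum_mFourier {ι : Type*} {k : ι → d → ℤ}
    (hk : Function.Injective k) {c : ι → ℂ} {g : UnitAddTorus d → ℂ}
    (hg : ∀ u, HasSum (fun i => c i * mFourier (k i) u) (g u)) :
    ∫⁻ u, ‖g u‖ₑ ^ 2 = ∑' i, ‖c i‖ₑ ^ 2 := by
  have hc : Summable fun i => ‖c i‖ := by simpa [mFourier] using (hg 0).summable.norm
  obtain ⟨G, hG⟩ : Summable fun i => c i • mFourier (k i) :=
    .of_norm (by simpa [norm_smul, mFourier_norm] using hc)
  have hGg : ⇑G = g := funext fun u => (hG.mapL (ContinuousMap.evalCLM ℂ u)).unique (hg u)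
  let gL2 : Lp ℂ 2 (volume : Measure (UnitAddTorus d)) := ContinuousMap.toLp 2 volume ℂ G
  have hgL2 : HasSum (fun i => ‖c i‖ ^ 2) (‖gL2‖ ^ 2) := by
    refine hasSum_norm_sq_of_orthonormal (orthonormal_toLp_mFourier.comp k hk) ?_
    simpa using hG.mapL (ContinuousMap.toLp (E := ℂ) 2 volume ℂ)
  calc ∫⁻ u, ‖g u‖ₑ ^ 2 = ∫⁻ u, ‖gL2 u‖ₑ ^ 2 := by
        refine lintegral_congr_ae ?_
        filter_upwards [ContinuousMap.coeFn_toLp (𝕜 := ℂ) (p := 2) volume G] with u hu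
        rw [hu, hGg]
    _ = ‖gL2‖ₑ ^ 2 := (enorm_sq_eq_lintegral_enorm_sq gL2).symm
    _ = ∑' i, ‖c i‖ₑ ^ 2 := by
        simp only [← ofReal_norm, ← ENNReal.ofReal_pow (norm_nonneg _)]
        rw [← hgL2.tsum_eq, ENNReal.ofReal_tsum_of_nonneg (fun _ => by positivity) hgL2.summable]

end Parseval

section Reinhardt

open UnitAddTorus

lemma lintegral_eq_lintegral_lintegral_comp {X Y Z : Type*} [MeasurableSpace X]
    [MeasurableSpace Y] [MeasurableSpace Z] {μ : Measure X} [SFinite μ] {ν : Measure Y}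
    [IsProbabilityMeasure ν] {ρ : Measure Z} {T : Y → X → Z}
    (hT : Measurable (Function.uncurry T)) (hTμ : ∀ y, MeasurePreserving (T y) μ ρ)
    {F : Z → ENNReal} (hF : Measurable F) :
    ∫⁻ z, F z ∂ρ = ∫⁻ x, ∫⁻ y, F (T y x) ∂ν ∂μ := by
  have hswap : Measurable (Function.uncurry fun x y => F (T y x)) :=
    hF.comp (hT.comp measurable_swap)
  rw [lintegral_lintegral_swap hswap.aemeasurable]
  simp only [(hTμ _).lintegral_comp hF, lintegral_const, measure_univ, mul_one]

lemma measurable_indicator_of_hasSum {X E κ : Type*} [MeasurableSpace X] [Countable κ]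
    [NormedAddCommGroup E] [MeasurableSpace E] [BorelSpace E] [SecondCountableTopology E]
    {s : Set X} (hs : MeasurableSet s) {u : κ → X → E} (hu : ∀ k, Measurable (u k)) {f : X → E}
    (hf : ∀ x ∈ s, HasSum (fun k => u k x) (f x)) : Measurable (s.indicator f) := by
  refine measurable_of_tendsto_metrizable' atTop
    (f := fun S : Finset κ => s.indicator fun x => ∑ k ∈ S, u k x)
    (fun S => (Finset.measurable_sum S fun k _ => hu k).indicator hs)
    (tendsto_pi_nhds.2 fun x => ?_)
  by_cases hx : x ∈ s
  · simpa [hx] using! hf x hx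
  · simp [hx]

variable {ι : Type*}

/-- A Reinhardt set of `ℂ^ι`: one that is stable under changing the arguments of the coordinates.
It is encoded by the moduli alone, without reference to an action of the torus. -/
def IsReinhardt (D : Set (ι → ℂ)) : Prop :=
  ∀ w ∈ D, ∀ z : ι → ℂ, (∀ j, ‖z j‖ = ‖w j‖) → z ∈ D

lemma isReinhardt_pi_ball (R : ι → ℝ) :
    IsReinhardt (Set.univ.pi fun j => Metric.ball (0 : ℂ) (R j)) := fun w hw z hz => by
  simpa [hz] using hw

/-- The action of the torus `(ℝ/ℤ)^ι` on `ℂ^ι` that multiplies `w_j` by `e^{2πi u_j}`. -/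
noncomputable def torusRotate (u : UnitAddTorus ι) (w : ι → ℂ) : ι → ℂ :=
  fun j => AddCircle.toCircle (u j) * w j

lemma norm_torusRotate_apply (u : UnitAddTorus ι) (w : ι → ℂ) (j : ι) :
    ‖torusRotate u w j‖ = ‖w j‖ := by
  simp [torusRotate, Circle.norm_coe]

lemma torusRotate_mem_iff {D : Set (ι → ℂ)} (hD : IsReinhardt D) (u : UnitAddTorus ι)
    (w : ι → ℂ) : torusRotate u w ∈ D ↔ w ∈ D :=
  ⟨fun h => hD _ h _ fun j => (norm_torusRotate_apply u w j).symm,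
    fun h => hD _ h _ (norm_torusRotate_apply u w)⟩

lemma continuous_uncurry_torusRotate :
    Continuous (Function.uncurry (torusRotate (ι := ι))) := by
  have := AddCircle.continuous_toCircle (T := (1 : ℝ))
  unfold torusRotate Function.uncurry
  fun_prop

variable [Fintype ι]

lemma measurePreserving_torusRotate (u : UnitAddTorus ι) :
    MeasurePreserving (torusRotate u) :=
  volume_preserving_pi fun j => (rotation (AddCircle.toCircle (u j))).measurePreserving

lemma prod_torusRotate_pow (u : UnitAddTorus ι) (w : ι → ℂ) (α : ι → ℕ) :
    ∏ j, torusRotate u w j ^ α j = (∏ j, w j ^ α j) * mFourier (fun j => (α j : ℤ)) u := by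
  simp [torusRotate, mFourier, fourier_apply, AddCircle.toCircle_nsmul, mul_pow,
    Finset.prod_mul_distrib, mul_comm]

lemma lintegral_enorm_sq_torusRotate {f : (ι → ℂ) → ℂ} {b : (ι → ℕ) → ℂ} {w : ι → ℂ}
    (hf : ∀ u, HasSum (fun α => b α * ∏ j, torusRotate u w j ^ α j) (f (torusRotate u w))) :
    ∫⁻ u, ‖f (torusRotate u w)‖ₑ ^ 2 = ∑' α, ‖b α * ∏ j, w j ^ α j‖ₑ ^ 2 := by
  have hinj : Function.Injective fun (α : ι → ℕ) (j : ι) => (α j : ℤ) :=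
    Nat.cast_injective.comp_left
  refine lintegral_enorm_sq_of_hasSum_mFourier hinj fun u => ?_
  simpa only [prod_torusRotate_pow, mul_assoc] using hf u

theorem setLIntegral_enorm_sq_of_isReinhardt {D : Set (ι → ℂ)} (hDm : MeasurableSet D)
    (hD : IsReinhardt D) {f : (ι → ℂ) → ℂ} {b : (ι → ℕ) → ℂ}
    (hf : ∀ w ∈ D, HasSum (fun α => b α * ∏ j, w j ^ α j) (f w)) :
    ∫⁻ w in D, ‖f w‖ₑ ^ 2 = ∑' α, ‖b α‖ₑ ^ 2 * ∫⁻ w in D, ‖∏ j, w j ^ α j‖ₑ ^ 2 := by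
  have hmonomial (α : ι → ℕ) : Measurable fun w : ι → ℂ => ∏ j, w j ^ α j := by fun_prop
  let g := D.indicator f
  have hgm : Measurable g :=
    measurable_indicator_of_hasSum hDm (fun α => (hmonomial α).const_mul (b α)) hf
  have hg : ∀ w ∈ D, HasSum (fun α => b α * ∏ j, w j ^ α j) (g w) := fun w hw => by
    simpa only [g, Set.indicator_of_mem hw] using hf w hw
  have hrotate (u : UnitAddTorus ι) :
      MeasurePreserving (torusRotate u) (volume.restrict D) (volume.restrict D) := by
    have hpre : torusRotate u ⁻¹' D = D := Set.ext (torusRotate_mem_iff hD u)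
    simpa only [hpre] using (measurePreserving_torusRotate u).restrict_preimage hDm
  calc ∫⁻ w in D, ‖f w‖ₑ ^ 2 = ∫⁻ w in D, ‖g w‖ₑ ^ 2 :=
        setLIntegral_congr_fun hDm fun w hw => by simp only [g, Set.indicator_of_mem hw]
    _ = ∫⁻ w in D, ∫⁻ u, ‖g (torusRotate u w)‖ₑ ^ 2 :=
        lintegral_eq_lintegral_lintegral_comp continuous_uncurry_torusRotate.measurable hrotate
          (hgm.enorm.pow_const 2)
    _ = ∫⁻ w in D, ∑' α, ‖b α * ∏ j, w j ^ α j‖ₑ ^ 2 :=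
        setLIntegral_congr_fun hDm fun w hw => lintegral_enorm_sq_torusRotate fun u =>
          hg _ ((torusRotate_mem_iff hD u w).2 hw)
    _ = ∑' α, ∫⁻ w in D, ‖b α * ∏ j, w j ^ α j‖ₑ ^ 2 :=
        lintegral_tsum fun α => (((hmonomial α).const_mul (b α)).enorm.pow_const 2).aemeasurable
    _ = ∑' α, ‖b α‖ₑ ^ 2 * ∫⁻ w in D, ‖∏ j, w j ^ α j‖ₑ ^ 2 := by
        refine tsum_congr fun α => ?_
        simp only [enorm_mul, mul_pow]
        exact lintegral_const_mul _ ((hmonomial α).enorm.pow_const 2)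

end Reinhardt

section Polydisc

open Module

lemma setIntegral_ball_norm_pow {E : Type*} [NormedAddCommGroup E] [NormedSpace ℝ E]
    [FiniteDimensional ℝ E] [Nontrivial E] [MeasurableSpace E] [BorelSpace E] (μ : Measure E)
    [μ.IsAddHaarMeasure] {R : ℝ} (hR : 0 ≤ R) (k : ℕ) :
    ∫ x in Metric.ball (0 : E) R, ‖x‖ ^ k ∂μ =
      finrank ℝ E / (finrank ℝ E + k) * μ.real (Metric.ball 0 1) *
        R ^ (finrank ℝ E + k) := by
  have hdim : 0 < finrank ℝ E := Module.finrank_pos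
  have hradial : (Metric.ball (0 : E) R).indicator (fun x => ‖x‖ ^ k) =
      fun x => (Set.Iio R).indicator (fun r : ℝ => r ^ k) ‖x‖ := by
    ext x
    simp [Set.indicator]
  have hweight : (fun r : ℝ => r ^ (finrank ℝ E - 1) •
      (Set.Iio R).indicator (fun r : ℝ => r ^ k) r) =
        (Set.Iio R).indicator fun r => r ^ (finrank ℝ E - 1 + k) := by
    ext r
    simp [Set.indicator, pow_add]
  have hpow : ∫ r in Set.Ioi (0 : ℝ),
      r ^ (finrank ℝ E - 1) • (Set.Iio R).indicator (fun r : ℝ => r ^ k) r =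
        R ^ (finrank ℝ E + k) / (finrank ℝ E + k) := by
    rw [hweight, setIntegral_indicator measurableSet_Iio, Set.Ioi_inter_Iio,
      ← integral_Ioc_eq_integral_Ioo, ← intervalIntegral.integral_of_le hR, integral_pow]
    have hexp : finrank ℝ E - 1 + k + 1 = finrank ℝ E + k := by lia
    rw [← Nat.cast_add_one, hexp, zero_pow (by lia), sub_zero, Nat.cast_add]
  rw [← integral_indicator measurableSet_ball, hradial,
    integral_fun_norm_addHaar μ ((Set.Iio R).indicator fun r : ℝ => r ^ k), hpow,
    nsmul_eq_mul, smul_eq_mul]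
  ring

lemma setIntegral_ball_complex_norm_pow_sq {R : ℝ} (hR : 0 ≤ R) (k : ℕ) :
    ∫ z in Metric.ball (0 : ℂ) R, (‖z‖ ^ k) ^ 2 =
      Real.pi * R ^ (2 * (k + 1)) / (k + 1) := by
  simp only [← pow_mul]
  rw [setIntegral_ball_norm_pow volume hR, Complex.finrank_real_complex, Measure.real,
    Complex.volume_ball]
  simp only [ENNReal.ofReal_one, one_pow, one_mul, ENNReal.coe_toReal, NNReal.coe_real_pi]
  push_cast
  field_simp
  ring

lemma setLIntegral_pi_ball_enorm_sq_monomial {ι : Type*} [Fintype ι] {R : ι → ℝ}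
    (hR : ∀ j, 0 ≤ R j) (α : ι → ℕ) :
    ∫⁻ w in Set.univ.pi fun j => Metric.ball (0 : ℂ) (R j), ‖∏ j, w j ^ α j‖ₑ ^ 2 =
      ENNReal.ofReal (∏ j, Real.pi * R j ^ (2 * (α j + 1)) / (α j + 1)) := by
  have hint (j : ι) : IntegrableOn (fun z : ℂ => (‖z‖ ^ α j) ^ 2) (Metric.ball 0 (R j)) :=
    (ContinuousOn.integrableOn_compact (isCompact_closedBall 0 (R j)) (by fun_prop)).mono_set
      Metric.ball_subset_closedBall
  simp only [← ofReal_norm, ← ENNReal.ofReal_pow (norm_nonneg _)]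
  simp only [norm_prod, norm_pow, ← Finset.prod_pow]
  rw [volume_pi, Measure.restrict_pi_pi, ← ofReal_integral_eq_lintegral_ofReal
      (Integrable.fintype_prod hint) (.of_forall fun w => by positivity),
    integral_fintype_prod_eq_prod fun j (z : ℂ) => (‖z‖ ^ α j) ^ 2]
  simp only [setIntegral_ball_complex_norm_pow_sq (hR _)]

theorem setLIntegral_pi_ball_enorm_sq_of_hasSum {ι : Type*} [Fintype ι] {R : ι → ℝ}
    (hR : ∀ j, 0 ≤ R j) {f : (ι → ℂ) → ℂ} {b : (ι → ℕ) → ℂ}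
    (hf : ∀ w ∈ Set.univ.pi fun j => Metric.ball (0 : ℂ) (R j),
      HasSum (fun α => b α * ∏ j, w j ^ α j) (f w)) :
    ∫⁻ w in Set.univ.pi fun j => Metric.ball (0 : ℂ) (R j), ‖f w‖ₑ ^ 2 =
      ∑' α, ‖b α‖ₑ ^ 2 *
        ENNReal.ofReal (∏ j, Real.pi * R j ^ (2 * (α j + 1)) / (α j + 1)) := by
  rw [setLIntegral_enorm_sq_of_isReinhardt (.univ_pi fun j => measurableSet_ball)
    (isReinhardt_pi_ball R) hf]
  simp only [setLIntegral_pi_ball_enorm_sq_monomial hR]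

end Polydisc

lemma psi_lt_iff {n : ℕ} (hn : 0 < n) {p : Fin n → ℝ} {w : Fin n → ℂ} {s : ℝ} :
    psi p w < s ↔ ∀ j, 2 * p j * Real.log ‖w j‖ < s := by
  have : Nonempty (Fin n) := ⟨⟨0, hn⟩⟩
  refine ⟨fun h j => (le_ciSup (Set.finite_range _).bddAbove j).trans_lt h, fun h => ?_⟩
  obtain ⟨j, hj⟩ := exists_eq_ciSup_of_finite (f := fun j => 2 * p j * Real.log ‖w j‖)
  exact hj.symm.trans_lt (h j)

lemma polydisc_subset_polydisc {n : ℕ} {p : Fin n → ℝ} (hp : ∀ j, 0 ≤ p j) {s s' : ℝ}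
    (hs : s ≤ s') : polydisc p s ⊆ polydisc p s' := fun _ hw j =>
  (hw j).trans_le <| Real.exp_le_exp.2 <|
    div_le_div_of_nonneg_right hs (mul_nonneg zero_le_two (hp j))

lemma polydisc_eq_pi_ball {n : ℕ} (p : Fin n → ℝ) (s : ℝ) :
    polydisc p s = Set.univ.pi fun j => Metric.ball 0 (Real.exp (s / (2 * p j))) := by
  ext w
  simp [polydisc]

-- As `Real.log 0 = 0`, the two sets may differ on the coordinate hyperplanes.
lemma setOf_psi_lt_ae_eq_polydisc {n : ℕ} (hn : 0 < n) {p : Fin n → ℝ} (hp : ∀ j, 0 < p j)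
    (s : ℝ) : {w | psi p w < s} =ᵐ[volume] polydisc p s := by
  have hne : ∀ᵐ w : Fin n → ℂ, ∀ j, w j ≠ 0 := ae_all_iff.2 fun j =>
    (Measure.quasiMeasurePreserving_eval (fun _ : Fin n => (volume : Measure ℂ)) j).ae
      (Measure.ae_ne volume 0)
  refine eventuallyEq_set.2 ?_
  filter_upwards [hne] with w hw
  refine (psi_lt_iff hn).trans (forall_congr' fun j => ?_)
  have hpj := hp j
  rw [← Real.log_lt_iff_lt_exp (norm_pos_iff.2 (hw j)), lt_div_iff₀' (by positivity)]

lemma exp_neg_qExp_mul {n : ℕ} (p : Fin n → ℝ) (α : Fin n → ℕ) (t : ℝ) :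
    Real.exp (-(qExp p α * t)) = ∏ j, Real.exp (-t / (2 * p j)) ^ (2 * (α j + 1)) := by
  rw [qExp, Finset.sum_mul, ← Finset.sum_neg_distrib, Real.exp_sum]
  refine Finset.prod_congr rfl fun j _ => ?_
  rw [← Real.exp_nat_mul]
  push_cast
  ring_nf

theorem stmt_6_general (n : ℕ) (hn : 0 < n) (p : Fin n → ℝ) (hp : ∀ j, 0 < p j) (t : ℝ)
    (f : (Fin n → ℂ) → ℂ) (b : (Fin n → ℕ) → ℂ)
    (hTaylor : ∀ w ∈ polydisc p (-t),
      HasSum (fun α : Fin n → ℕ => b α * ∏ j, (w j) ^ (α j)) (f w)) :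
    (∫⁻ w in {w : Fin n → ℂ | psi p w < -t}, ENNReal.ofReal (‖f w‖ ^ 2)) =
      ∑' α : Fin n → ℕ,
        ENNReal.ofReal (Real.exp (-(qExp p α * t)) * ‖b α‖ ^ 2 * Real.pi ^ n /
          ∏ j, ((α j : ℝ) + 1)) := by
  rw [setLIntegral_congr (setOf_psi_lt_ae_eq_polydisc hn hp (-t))]
  simp only [ENNReal.ofReal_pow (norm_nonneg _), ofReal_norm]
  rw [polydisc_eq_pi_ball] at hTaylor ⊢
  rw [setLIntegral_pi_ball_enorm_sq_of_hasSum (fun j => (Real.exp_pos _).le) hTaylor]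
  refine tsum_congr fun α => ?_
  rw [← ofReal_norm, ← ENNReal.ofReal_pow (norm_nonneg _), ← ENNReal.ofReal_mul (by positivity),
    Finset.prod_div_distrib, Finset.prod_mul_distrib, Finset.prod_const, Finset.card_univ,
    Fintype.card_fin, exp_neg_qExp_mul]
  ring_nf

theorem stmt_6 (n : ℕ) (hn : 0 < n) (p : Fin n → ℝ) (hp : ∀ j, 0 < p j)
    (t₀ : ℝ) (ht₀ : 0 < t₀) (f : (Fin n → ℂ) → ℂ) (b : (Fin n → ℕ) → ℂ)
    (hf : DifferentiableOn ℂ f (polydisc p (-t₀)))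
    (hTaylor : ∀ w ∈ polydisc p (-t₀),
      HasSum (fun α : Fin n → ℕ => b α * ∏ j, (w j) ^ (α j)) (f w))
    (t : ℝ) (ht : t₀ ≤ t) :
    (∫⁻ w in {w : Fin n → ℂ | psi p w < -t}, ENNReal.ofReal (‖f w‖ ^ 2)) =
      ∑' α : Fin n → ℕ,
        ENNReal.ofReal (Real.exp (-(qExp p α * t)) * ‖b α‖ ^ 2 * Real.pi ^ n /
          ∏ j, ((α j : ℝ) + 1)) := by
  exact stmt_6_general n hn p hp t f b fun w hw =>
    hTaylor w (polydisc_subset_polydisc (fun j => (hp j).le) (neg_le_neg ht) hw)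
end
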